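/- In the low privacy regime, the optimal cost satisfies V*(ε) = 2^{1/3}·Δ·e^{−ε/3} + (Δ/2^{1/3})·e^{−2ε/3} + o(e^{−2ε/3}) as ε → +∞; precisely, lim_{ε→+∞} e^{ε/3}·V*(ε) = 2^{1/3}·Δ and lim_{ε→+∞} e^{2ε/3}·(V*(ε) − 2^{1/3}·Δ·e^{−ε/3}) = Δ/2^{1/3}. -/

import Mathlib

open MeasureTheory Real Filter
open scoped ENNReal Topology

noncomputable section

/-- The ℓ¹ norm on ℝ². -/
def l1 (x : ℝ × ℝ) : ℝ := |x.1| + |x.2|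

/-- The ε-differential-privacy constraint on a measure on ℝ² with sensitivity Δ. -/
def DPC (ε Δ : ℝ) (μ : Measure (ℝ × ℝ)) : Prop :=
  ∀ S : Set (ℝ × ℝ), MeasurableSet S → ∀ t : ℝ × ℝ, l1 t ≤ Δ →
    μ S ≤ ENNReal.ofReal (Real.exp ε) * μ ((· + t) '' S)

/-- Expected ℓ¹ cost of a noise distribution. -/
def cost (μ : Measure (ℝ × ℝ)) : ℝ≥0∞ := ∫⁻ x, ENNReal.ofReal (l1 x) ∂μ

/-- The optimal cost V*(ε): the infimum of the expected ℓ¹ cost over all probability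
measures on ℝ² satisfying the ε-differential-privacy constraint. -/
def Vstar (Δ ε : ℝ) : ℝ≥0∞ :=
  ⨅ (μ : Measure (ℝ × ℝ)) (_ : IsProbabilityMeasure μ ∧ DPC ε Δ μ), cost μ

/-!
Lower bound: the privacy constraint bounds the density at a point of a ray from the origin by
`exp ε` times the density at every point of the ray within distance `Δ`. So mass at radius below
`v` forces mass at radius above `v`, and if the radial weight `r dr` makes the forced excess
outweigh the deficit, then the mean norm is at least `v`. To second order only two comparisons
matter: `(0, a]` against `(v, Δ]`, and `(0, v]` against `(v, Δ + a]`, with `a` close to `v`.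

Upper bound: a radial staircase density, with steps of width `Δ` and ratio `exp (-ε)`,
is private in any norm. Its steps beyond the second contribute only `O(exp (-2 * ε))`.

With `s = exp (-ε / 3)` and `c = 2 ^ (1 / 3)`, both bounds have the form `Δ * s * (c + s * y)`, and
they hold for large `ε` as soon as `c * y < 1`, respectively `c * y > 1`.
-/

/-! ### Integration tools -/

section Integration

variable {α : Type*} [MeasurableSpace α]

lemma mul_lintegral_le_of_lintegral_tsub_le {m : Measure α} {f h : α → ℝ≥0∞} (hf : Measurable f)
    (hh : Measurable h) (v : ℝ≥0∞)
    (H : ∫⁻ a, (v - f a) * h a ∂m ≤ ∫⁻ a, (f a - v) * h a ∂m) :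
    v * ∫⁻ a, h a ∂m ≤ ∫⁻ a, f a * h a ∂m := by
  have hmin : Measurable fun a ↦ min (f a) v * h a := by fun_prop
  calc v * ∫⁻ a, h a ∂m
      = ∫⁻ a, (v - f a) * h a + min (f a) v * h a ∂m := by
        simp only [← lintegral_const_mul v hh, ← add_mul, min_comm (f _), tsub_add_min]
    _ ≤ ∫⁻ a, (f a - v) * h a + min (f a) v * h a ∂m := by
        rw [lintegral_add_right _ hmin, lintegral_add_right _ hmin]
        gcongr
    _ = ∫⁻ a, f a * h a ∂m := by simp only [← add_mul, tsub_add_min]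

lemma lintegral_mul_measure_ball [PseudoMetricSpace α] [SecondCountableTopology α]
    [OpensMeasurableSpace α] (μ ν : Measure α) [SFinite μ] [SFinite ν] {f : α → ℝ≥0∞}
    (hf : Measurable f) (δ : ℝ) :
    ∫⁻ x, f x * μ (Metric.ball x δ) ∂ν = ∫⁻ z, ∫⁻ x in Metric.ball z δ, f x ∂ν ∂μ := by
  have hT : MeasurableSet {p : α × α | dist p.1 p.2 < δ} :=
    measurableSet_lt measurable_dist measurable_const
  calc ∫⁻ x, f x * μ (Metric.ball x δ) ∂ν
      = ∫⁻ x, ∫⁻ z, {p : α × α | dist p.1 p.2 < δ}.indicator (fun p ↦ f p.1) (x, z) ∂μ ∂ν := by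
        refine lintegral_congr fun x ↦ ?_
        rw [← lintegral_indicator_const measurableSet_ball]
        exact lintegral_congr fun z ↦ Set.indicator_eq_indicator Metric.mem_ball' rfl
    _ = ∫⁻ z, ∫⁻ x, {p : α × α | dist p.1 p.2 < δ}.indicator (fun p ↦ f p.1) (x, z) ∂ν ∂μ :=
        lintegral_lintegral_swap ((hf.comp measurable_fst).indicator hT).aemeasurable
    _ = ∫⁻ z, ∫⁻ x in Metric.ball z δ, f x ∂ν ∂μ := by
        refine lintegral_congr fun z ↦ ?_
        rw [← lintegral_indicator measurableSet_ball]
        exact lintegral_congr fun x ↦ Set.indicator_eq_indicator Iff.rfl rfl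

lemma measurable_measure_ball [PseudoMetricSpace α] [SecondCountableTopology α]
    [OpensMeasurableSpace α] (μ : Measure α) [SFinite μ] (δ : ℝ) :
    Measurable fun x ↦ μ (Metric.ball x δ) := by
  have hT : MeasurableSet {p : α × α | dist p.2 p.1 < δ} :=
    measurableSet_lt (measurable_snd.dist measurable_fst) measurable_const
  exact measurable_measure_prodMk_left hT

end Integration

/-! ### Polar coordinates -/

/-- The radial part `r ^ n dr` on `(0, ∞)` of Haar measure in dimension `n + 1`; it is Mathlib's
`Measure.volumeIoiPow n`, but as a measure on `ℝ` instead of a subtype. -/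
def radialMeasure (n : ℕ) : Measure ℝ :=
  (volume.restrict (Set.Ioi 0)).withDensity fun r ↦ ENNReal.ofReal (r ^ n)

lemma lintegral_radialMeasure (n : ℕ) {f : ℝ → ℝ≥0∞} (hf : Measurable f) :
    ∫⁻ r, f r ∂radialMeasure n = ∫⁻ r in Set.Ioi 0, ENNReal.ofReal (r ^ n) * f r :=
  lintegral_withDensity_eq_lintegral_mul _ (by fun_prop) hf

lemma lintegral_volumeIoiPow (n : ℕ) {f : ℝ → ℝ≥0∞} (hf : Measurable f) :
    ∫⁻ r, f r ∂Measure.volumeIoiPow n = ∫⁻ r, f r ∂radialMeasure n := by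
  rw [lintegral_radialMeasure n hf, Measure.volumeIoiPow,
    lintegral_withDensity_eq_lintegral_mul _ (by fun_prop) (by fun_prop)]
  exact lintegral_subtype_comap measurableSet_Ioi fun r ↦ ENNReal.ofReal (r ^ n) * f r

lemma ae_radialMeasure_pos (n : ℕ) : ∀ᵐ r ∂radialMeasure n, 0 < r :=
  (withDensity_absolutelyContinuous _ _).ae_le (ae_restrict_mem measurableSet_Ioi)

lemma setLIntegral_Ioc_radialMeasure (n : ℕ) {p : ℝ → ℝ} (hp : Continuous p) {x y : ℝ}
    (hx : 0 ≤ x) (hxy : x ≤ y) (hp0 : ∀ r ∈ Set.Ioc x y, 0 ≤ p r) :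
    ∫⁻ r in Set.Ioc x y, ENNReal.ofReal (p r) ∂radialMeasure n =
      ENNReal.ofReal (∫ r in x..y, r ^ n * p r) := by
  have hpos : Set.Ioc x y ⊆ Set.Ioi 0 := fun _ hr ↦ hx.trans_lt hr.1
  rw [radialMeasure, setLIntegral_withDensity_eq_setLIntegral_mul _ (by fun_prop)
      hp.measurable.ennreal_ofReal measurableSet_Ioc, Measure.restrict_restrict measurableSet_Ioc,
    Set.inter_eq_left.2 hpos, intervalIntegral.integral_of_le hxy,
    ofReal_integral_eq_lintegral_ofReal
      (by fun_prop : Continuous fun r : ℝ ↦ r ^ n * p r).integrableOn_Ioc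
      ((ae_restrict_iff' measurableSet_Ioc).2 (ae_of_all _ fun r hr ↦
        mul_nonneg (pow_nonneg (hpos hr : 0 < r).le n) (hp0 r hr)))]
  exact setLIntegral_congr_fun measurableSet_Ioc fun r hr ↦
    (ENNReal.ofReal_mul (pow_nonneg (hpos hr : 0 < r).le n)).symm

section Polar

variable {E : Type*} [NormedAddCommGroup E] [NormedSpace ℝ E] [FiniteDimensional ℝ E]
  [MeasurableSpace E] [BorelSpace E] (ν : Measure E) [ν.IsAddHaarMeasure]

lemma lintegral_eq_lintegral_toSphere {n : ℕ} (hE : Module.finrank ℝ E = n + 1)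
    {F : E → ℝ≥0∞} (hF : Measurable F) :
    ∫⁻ x, F x ∂ν = ∫⁻ u : Metric.sphere (0 : E) 1,
      ∫⁻ r, F (r • (u : E)) ∂radialMeasure n ∂ν.toSphere := by
  have : Nontrivial E := Module.nontrivial_of_finrank_pos (R := ℝ) (by lia)
  have hpolar := ν.measurePreserving_homeomorphUnitSphereProd.symm
    (homeomorphUnitSphereProd E).toMeasurableEquiv
  rw [hE, Nat.add_sub_cancel] at hpolar
  calc ∫⁻ x, F x ∂ν
      = ∫⁻ x : ({0}ᶜ : Set E), F x ∂ν.comap (↑) := by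
        rw [lintegral_subtype_comap (measurableSet_singleton _).compl,
          restrict_compl_singleton]
    _ = ∫⁻ p, F (p.2.1 • p.1.1) ∂ν.toSphere.prod (Measure.volumeIoiPow n) :=
        (hpolar.lintegral_comp (hF.comp measurable_subtype_coe)).symm
    _ = _ := by
        rw [lintegral_prod _ (by fun_prop)]
        exact lintegral_congr fun u ↦
          lintegral_volumeIoiPow _ (f := fun r ↦ F (r • (u : E))) (by fun_prop)

lemma lintegral_comp_norm {n : ℕ} (hE : Module.finrank ℝ E = n + 1) {G : ℝ → ℝ≥0∞}
    (hG : Measurable G) :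
    ∫⁻ x, G ‖x‖ ∂ν = (∫⁻ r, G r ∂radialMeasure n) * ν.toSphere Set.univ := by
  rw [lintegral_eq_lintegral_toSphere ν hE (F := fun x ↦ G ‖x‖) (by fun_prop), ← lintegral_const]
  refine lintegral_congr fun u ↦ lintegral_congr_ae ?_
  filter_upwards [ae_radialMeasure_pos _] with r hr
  rw [norm_smul, norm_eq_of_mem_sphere, mul_one, Real.norm_of_nonneg hr.le]

end Polar

/-! ### The inequality on a ray -/

section Ray

lemma lintegral_mul_indicator_add_indicator {α : Type*} [MeasurableSpace α] {m : Measure α}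
    {f : α → ℝ≥0∞} (hf : Measurable f) {s t : Set α} (hs : MeasurableSet s)
    (ht : MeasurableSet t) (c d : ℝ≥0∞) :
    ∫⁻ x, f x * (s.indicator (fun _ ↦ c) x + t.indicator (fun _ ↦ d) x) ∂m =
      c * ∫⁻ x in s, f x ∂m + d * ∫⁻ x in t, f x ∂m := by
  have hterm : ∀ {u : Set α}, MeasurableSet u → ∀ e : ℝ≥0∞,
      ∫⁻ x, f x * u.indicator (fun _ ↦ e) x ∂m = e * ∫⁻ x in u, f x ∂m := fun {u} hu e ↦ by
    rw [← lintegral_const_mul e hf, ← lintegral_indicator hu]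
    refine lintegral_congr fun x ↦ ?_
    rw [← Set.indicator_mul_right u f fun _ ↦ e]
    simp only [mul_comm]
  simp only [mul_add]
  rw [lintegral_add_left (by fun_prop (disch := assumption)), hterm hs, hterm ht]

lemma ofReal_mul_lintegral_le_of_two_levels {ρ : Measure ℝ} (hρ : ∀ᵐ r ∂ρ, 0 < r)
    {h : ℝ → ℝ≥0∞} (hh : Measurable h) {B J K : ℝ≥0∞} (hB : B ≠ ⊤) {v : ℝ} (hv : 0 ≤ v)
    {s₁ t₁ s₂ t₂ : Set ℝ} (hs₁ : MeasurableSet s₁) (ht₁ : MeasurableSet t₁)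
    (hs₂ : MeasurableSet s₂) (ht₂ : MeasurableSet t₂)
    (hnear : ∀ r ∈ Set.Ioc 0 v,
      h r ≤ B * (s₁.indicator (fun _ ↦ J) r + t₁.indicator (fun _ ↦ K) r))
    (hfar : ∀ r, s₂.indicator (fun _ ↦ J) r + t₂.indicator (fun _ ↦ K) r ≤ h r)
    (hs : B * ∫⁻ r in s₁, ENNReal.ofReal (v - r) ∂ρ ≤ ∫⁻ r in s₂, ENNReal.ofReal (r - v) ∂ρ)
    (ht : B * ∫⁻ r in t₁, ENNReal.ofReal (v - r) ∂ρ ≤ ∫⁻ r in t₂, ENNReal.ofReal (r - v) ∂ρ) :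
    ENNReal.ofReal v * ∫⁻ r, h r ∂ρ ≤ ∫⁻ r, ENNReal.ofReal r * h r ∂ρ := by
  refine mul_lintegral_le_of_lintegral_tsub_le ENNReal.measurable_ofReal hh _ ?_
  calc ∫⁻ r, (ENNReal.ofReal v - ENNReal.ofReal r) * h r ∂ρ
      ≤ ∫⁻ r, B * (ENNReal.ofReal (v - r) * (s₁.indicator (fun _ ↦ J) r +
          t₁.indicator (fun _ ↦ K) r)) ∂ρ := by
        refine lintegral_mono_ae ?_
        filter_upwards [hρ] with r hr
        rw [← ENNReal.ofReal_sub v hr.le, mul_left_comm]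
        rcases le_or_gt r v with hrv | hrv
        · gcongr
          exact hnear r ⟨hr, hrv⟩
        · simp [ENNReal.ofReal_of_nonpos (sub_nonpos.2 hrv.le)]
    _ = J * (B * ∫⁻ r in s₁, ENNReal.ofReal (v - r) ∂ρ) +
          K * (B * ∫⁻ r in t₁, ENNReal.ofReal (v - r) ∂ρ) := by
        rw [lintegral_const_mul' _ _ hB, lintegral_mul_indicator_add_indicator (by fun_prop)
          hs₁ ht₁]
        ring
    _ ≤ J * (∫⁻ r in s₂, ENNReal.ofReal (r - v) ∂ρ) +
          K * (∫⁻ r in t₂, ENNReal.ofReal (r - v) ∂ρ) := by gcongr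
    _ ≤ ∫⁻ r, (ENNReal.ofReal r - ENNReal.ofReal v) * h r ∂ρ := by
        rw [← lintegral_mul_indicator_add_indicator (by fun_prop) hs₂ ht₂]
        refine lintegral_mono fun r ↦ ?_
        rw [← ENNReal.ofReal_sub r hv]
        exact mul_le_mul_right (hfar r) _

lemma le_mul_iInf_of_abs_sub_le {h : ℝ → ℝ≥0∞} {B : ℝ≥0∞} (hB0 : B ≠ 0) (hB : B ≠ ⊤) {Δ : ℝ}
    (hdp : ∀ r r', 0 ≤ r → 0 ≤ r' → |r - r'| ≤ Δ → h r ≤ B * h r') {r x y : ℝ} (hr : 0 ≤ r)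
    (hrx : r ≤ x) (hy : y ≤ r + Δ) :
    h r ≤ B * ⨅ s : Set.Ioc x y, h s := by
  rw [ENNReal.mul_iInf_of_ne hB0 hB]
  refine le_iInf fun s ↦ hdp r s hr (by linarith [s.2.1]) (abs_le.2 ⟨?_, ?_⟩) <;>
    linarith [s.2.1, s.2.2]

-- The density near the origin is controlled by the density far away: with `J ≤ J + K` the infima
-- of `h` over `(v, Δ + a]` and `(v, Δ]`, it is at most `B * (J + K)` on `(0, a]` and `B * J` on
-- `(a, v]`. Weighting `hAB` by `J` and `hA` by `K` compares the two sides of `v`.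
lemma ofReal_mul_lintegral_le_lintegral_ofReal_mul {ρ : Measure ℝ} (hρ : ∀ᵐ r ∂ρ, 0 < r)
    {h : ℝ → ℝ≥0∞} (hh : Measurable h) {B : ℝ≥0∞} (hB0 : B ≠ 0) (hB : B ≠ ⊤) {a v Δ : ℝ}
    (ha : 0 ≤ a) (hav : a ≤ v)
    (hdp : ∀ r r', 0 ≤ r → 0 ≤ r' → |r - r'| ≤ Δ → h r ≤ B * h r')
    (hA : B * ∫⁻ r in Set.Ioc 0 a, ENNReal.ofReal (v - r) ∂ρ ≤
      ∫⁻ r in Set.Ioc v Δ, ENNReal.ofReal (r - v) ∂ρ)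
    (hAB : B * ∫⁻ r in Set.Ioc 0 v, ENNReal.ofReal (v - r) ∂ρ ≤
      ∫⁻ r in Set.Ioc v (Δ + a), ENNReal.ofReal (r - v) ∂ρ) :
    ENNReal.ofReal v * ∫⁻ r, h r ∂ρ ≤ ∫⁻ r, ENNReal.ofReal r * h r ∂ρ := by
  set J := ⨅ s : Set.Ioc v (Δ + a), h s
  obtain ⟨K, hK⟩ : ∃ K, ⨅ s : Set.Ioc v Δ, h s = J + K :=
    exists_add_of_le (le_iInf fun s ↦ iInf_le (fun s : Set.Ioc v (Δ + a) ↦ h s)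
      ⟨s, s.2.1, s.2.2.trans (by linarith)⟩)
  have hnear : ∀ r ∈ Set.Ioc 0 v, h r ≤ B *
      ((Set.Ioc 0 v).indicator (fun _ ↦ J) r + (Set.Ioc 0 a).indicator (fun _ ↦ K) r) := by
    intro r hr
    rw [Set.indicator_of_mem hr]
    by_cases hra : r ≤ a
    · rw [Set.indicator_of_mem (show r ∈ Set.Ioc 0 a from ⟨hr.1, hra⟩), ← hK]
      exact le_mul_iInf_of_abs_sub_le hB0 hB hdp hr.1.le hr.2 (by linarith [hr.1])
    · rw [Set.indicator_of_notMem fun h ↦ hra h.2, add_zero]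
      exact le_mul_iInf_of_abs_sub_le hB0 hB hdp hr.1.le hr.2 (by linarith)
  have hfar (r : ℝ) : (Set.Ioc v (Δ + a)).indicator (fun _ ↦ J) r +
      (Set.Ioc v Δ).indicator (fun _ ↦ K) r ≤ h r := by
    by_cases hr : r ∈ Set.Ioc v Δ
    · have hr' : r ∈ Set.Ioc v (Δ + a) := ⟨hr.1, hr.2.trans (by linarith)⟩
      rw [Set.indicator_of_mem hr, Set.indicator_of_mem hr', ← hK]
      exact iInf_le (fun s : Set.Ioc v Δ ↦ h s) ⟨r, hr⟩
    · rw [Set.indicator_of_notMem hr, add_zero]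
      exact Set.indicator_apply_le fun hr ↦ iInf_le (fun s : Set.Ioc v (Δ + a) ↦ h s) ⟨r, hr⟩
  exact ofReal_mul_lintegral_le_of_two_levels hρ hh hB (ha.trans hav) measurableSet_Ioc
    measurableSet_Ioc measurableSet_Ioc measurableSet_Ioc hnear hfar hAB hA

end Ray

/-! ### Differentially private noise in a normed space -/

section Privacy

variable {E : Type*} [NormedAddCommGroup E] [MeasurableSpace E]

/-- Additive noise with law `μ` is `ε`-differentially private for queries of sensitivity `Δ`;
`DPC` is the case of the `ℓ¹` norm on the plane. -/
def IsDiffPrivate (Δ ε : ℝ) (μ : Measure E) : Prop :=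
  ∀ S : Set E, MeasurableSet S → ∀ t : E, ‖t‖ ≤ Δ →
    μ S ≤ ENNReal.ofReal (exp ε) * μ ((· + t) '' S)

/-- The least expected norm of `ε`-differentially private noise on `E` with sensitivity `Δ`. -/
def optimalCost (E : Type*) [NormedAddCommGroup E] [MeasurableSpace E] (Δ ε : ℝ) : ℝ≥0∞ :=
  ⨅ (μ : Measure E) (_ : IsProbabilityMeasure μ ∧ IsDiffPrivate Δ ε μ), ∫⁻ x, ‖x‖ₑ ∂μ

lemma IsDiffPrivate.measure_ball_le [OpensMeasurableSpace E] {Δ ε : ℝ} {μ : Measure E}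
    (hμ : IsDiffPrivate Δ ε μ) (δ : ℝ) {x y : E} (hxy : ‖x - y‖ ≤ Δ) :
    μ (Metric.ball x δ) ≤ ENNReal.ofReal (exp ε) * μ (Metric.ball y δ) := by
  have himage : (· + (y - x)) '' Metric.ball x δ = Metric.ball y δ := by
    rw [Set.image_add_right, Metric.preimage_add_right_ball, sub_neg_eq_add, add_sub_cancel]
  simpa only [himage] using
    hμ (Metric.ball x δ) measurableSet_ball (y - x) (by rwa [norm_sub_rev])

end Privacy

/-! ### The lower bound -/

section LowerBound

variable {E : Type*} [NormedAddCommGroup E] [NormedSpace ℝ E] [FiniteDimensional ℝ E]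
  [MeasurableSpace E] [BorelSpace E]

lemma lintegral_measure_ball (μ ν : Measure E) [SFinite μ] [ν.IsAddHaarMeasure] (δ : ℝ) :
    ∫⁻ x, μ (Metric.ball x δ) ∂ν = ν (Metric.ball 0 δ) * μ Set.univ := by
  have hswap := lintegral_mul_measure_ball μ ν (f := 1) measurable_const δ
  simpa only [Pi.one_apply, one_mul, lintegral_one, Measure.restrict_apply_univ,
    Measure.addHaar_ball_center, lintegral_const] using hswap

lemma lintegral_enorm_mul_measure_ball_le (μ ν : Measure E) [SFinite μ] [ν.IsAddHaarMeasure]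
    (δ : ℝ) :
    ∫⁻ x, ‖x‖ₑ * μ (Metric.ball x δ) ∂ν ≤
      ν (Metric.ball 0 δ) * ∫⁻ z, ‖z‖ₑ + ENNReal.ofReal δ ∂μ := by
  rw [lintegral_mul_measure_ball μ ν measurable_enorm, ← lintegral_const_mul _ (by fun_prop)]
  refine lintegral_mono fun z ↦ ?_
  rw [← Measure.addHaar_ball_center ν z, mul_comm, ← setLIntegral_const]
  refine setLIntegral_mono measurable_const fun x hx ↦ ?_
  calc ‖x‖ₑ = ‖z + (x - z)‖ₑ := by rw [add_sub_cancel]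
    _ ≤ ‖z‖ₑ + ‖x - z‖ₑ := enorm_add_le _ _
    _ ≤ ‖z‖ₑ + ENNReal.ofReal δ := by
        rw [← ofReal_norm (x - z)]
        gcongr
        exact (mem_ball_iff_norm.1 hx).le

variable {n : ℕ} {B : ℝ≥0∞} {a v Δ ε : ℝ}

lemma ofReal_mul_lintegral_le_lintegral_enorm_mul (ν : Measure E) [ν.IsAddHaarMeasure]
    (hE : Module.finrank ℝ E = n + 1) {g : E → ℝ≥0∞} (hg : Measurable g)
    (hB0 : B ≠ 0) (hB : B ≠ ⊤) (ha : 0 ≤ a) (hav : a ≤ v)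
    (hdp : ∀ x y, ‖x - y‖ ≤ Δ → g x ≤ B * g y)
    (hA : B * ∫⁻ r in Set.Ioc 0 a, ENNReal.ofReal (v - r) ∂radialMeasure n ≤
      ∫⁻ r in Set.Ioc v Δ, ENNReal.ofReal (r - v) ∂radialMeasure n)
    (hAB : B * ∫⁻ r in Set.Ioc 0 v, ENNReal.ofReal (v - r) ∂radialMeasure n ≤
      ∫⁻ r in Set.Ioc v (Δ + a), ENNReal.ofReal (r - v) ∂radialMeasure n) :
    ENNReal.ofReal v * ∫⁻ x, g x ∂ν ≤ ∫⁻ x, ‖x‖ₑ * g x ∂ν := by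
  rw [lintegral_eq_lintegral_toSphere ν hE hg, lintegral_eq_lintegral_toSphere ν hE (by fun_prop),
    ← lintegral_const_mul' _ _ ENNReal.ofReal_ne_top]
  refine lintegral_mono fun u ↦ ?_
  have hray (r r' : ℝ) : r • (u : E) - r' • (u : E) = (r - r') • (u : E) := (sub_smul ..).symm
  refine (ofReal_mul_lintegral_le_lintegral_ofReal_mul (ae_radialMeasure_pos _)
    (h := fun r ↦ g (r • (u : E))) (by fun_prop) hB0 hB ha hav
    (fun r r' _ _ hrr' ↦ hdp _ _ ?_) hA hAB).trans_eq (lintegral_congr_ae ?_)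
  · rwa [hray, norm_smul, norm_eq_of_mem_sphere, mul_one]
  · filter_upwards [ae_radialMeasure_pos _] with r hr
    rw [enorm_smul, ← ofReal_norm (u : E), norm_eq_of_mem_sphere, ENNReal.ofReal_one,
      mul_one, Real.enorm_of_nonneg hr.le]

-- `x ↦ μ (ball x δ)` stands in for the density of `μ`, which need not exist; it inherits the
-- privacy constraint pointwise, and smoothing at scale `δ` raises the cost by at most `δ`.
theorem IsDiffPrivate.ofReal_le_lintegral_enorm
    (hE : Module.finrank ℝ E = n + 1) {μ : Measure E} [IsProbabilityMeasure μ]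
    (hμ : IsDiffPrivate Δ ε μ) (ha : 0 ≤ a) (hav : a ≤ v)
    (hA : ENNReal.ofReal (exp ε) * ∫⁻ r in Set.Ioc 0 a, ENNReal.ofReal (v - r)
        ∂radialMeasure n ≤
      ∫⁻ r in Set.Ioc v Δ, ENNReal.ofReal (r - v) ∂radialMeasure n)
    (hAB : ENNReal.ofReal (exp ε) * ∫⁻ r in Set.Ioc 0 v, ENNReal.ofReal (v - r)
        ∂radialMeasure n ≤
      ∫⁻ r in Set.Ioc v (Δ + a), ENNReal.ofReal (r - v) ∂radialMeasure n) :
    ENNReal.ofReal v ≤ ∫⁻ x, ‖x‖ₑ ∂μ := by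
  let ν : Measure E := Measure.addHaar
  refine ENNReal.le_of_forall_pos_le_add fun δ hδ _ ↦ ?_
  have hball : ν (Metric.ball 0 δ) ≠ 0 := (Metric.measure_ball_pos ν 0 hδ).ne'
  rw [← ENNReal.mul_le_mul_iff_right hball measure_ball_lt_top.ne]
  calc ν (Metric.ball 0 δ) * ENNReal.ofReal v
      = ENNReal.ofReal v * ∫⁻ x, μ (Metric.ball x δ) ∂ν := by
        rw [lintegral_measure_ball, measure_univ, mul_one, mul_comm]
    _ ≤ ∫⁻ x, ‖x‖ₑ * μ (Metric.ball x δ) ∂ν :=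
        ofReal_mul_lintegral_le_lintegral_enorm_mul ν hE (measurable_measure_ball μ δ)
          (by positivity) ENNReal.ofReal_ne_top ha hav
          (fun x y hxy ↦ hμ.measure_ball_le δ hxy) hA hAB
    _ ≤ ν (Metric.ball 0 δ) * ∫⁻ z, ‖z‖ₑ + ENNReal.ofReal δ ∂μ :=
        lintegral_enorm_mul_measure_ball_le μ ν δ
    _ = ν (Metric.ball 0 δ) * (∫⁻ x, ‖x‖ₑ ∂μ + δ) := by
        rw [lintegral_add_right _ measurable_const, lintegral_const, measure_univ, mul_one,
          ENNReal.ofReal_coe_nnreal]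

end LowerBound

/-! ### Radial noise and the staircase density -/

section Radial

variable {E : Type*} [NormedAddCommGroup E] [MeasurableSpace E] {Δ ε : ℝ}

lemma isDiffPrivate_withDensity [BorelSpace E] (ν : Measure E) [ν.IsAddLeftInvariant]
    {φ : ℝ → ℝ≥0∞} (hdp : ∀ r r', r' ≤ r + Δ → φ r ≤ ENNReal.ofReal (exp ε) * φ r') :
    IsDiffPrivate Δ ε (ν.withDensity fun x ↦ φ ‖x‖) := by
  intro S hS t ht
  have htrans : MeasurableEmbedding (· + t) := (MeasurableEquiv.addRight t).measurableEmbedding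
  have hpres : MeasurePreserving (· + t) ν ν := measurePreserving_add_right ν t
  rw [withDensity_apply _ hS, withDensity_apply _ (htrans.measurableSet_image.2 hS),
    ← hpres.setLIntegral_comp_emb htrans, ← lintegral_const_mul' _ _ ENNReal.ofReal_ne_top]
  exact lintegral_mono fun x ↦ hdp _ _ ((norm_add_le x t).trans (by gcongr))

lemma IsDiffPrivate.smul {μ : Measure E} (hμ : IsDiffPrivate Δ ε μ) (c : ℝ≥0∞) :
    IsDiffPrivate Δ ε (c • μ) := fun S hS t ht ↦ by
  simp only [Measure.smul_apply, smul_eq_mul, mul_left_comm _ c]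
  gcongr
  exact hμ S hS t ht

lemma IsDiffPrivate.optimalCost_le_div {μ : Measure E} (hμ : IsDiffPrivate Δ ε μ)
    [IsFiniteMeasure μ] [NeZero μ] :
    optimalCost E Δ ε ≤ (∫⁻ x, ‖x‖ₑ ∂μ) / μ Set.univ := by
  refine (iInf₂_le ((μ Set.univ)⁻¹ • μ) ⟨inferInstance, hμ.smul _⟩).trans_eq ?_
  rw [lintegral_smul_measure, smul_eq_mul, mul_comm, ENNReal.div_eq_inv_mul, mul_comm]

variable [NormedSpace ℝ E] [FiniteDimensional ℝ E] [BorelSpace E] {n : ℕ}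

lemma optimalCost_le_of_radial (hE : Module.finrank ℝ E = n + 1) {φ : ℝ → ℝ≥0∞}
    (hφ : Measurable φ) (hdp : ∀ r r', r' ≤ r + Δ → φ r ≤ ENNReal.ofReal (exp ε) * φ r')
    (h0 : ∫⁻ r, φ r ∂radialMeasure n ≠ 0) (hfin : ∫⁻ r, φ r ∂radialMeasure n ≠ ⊤) :
    optimalCost E Δ ε ≤
      (∫⁻ r, ENNReal.ofReal r * φ r ∂radialMeasure n) / ∫⁻ r, φ r ∂radialMeasure n := by
  have : Nontrivial E := Module.nontrivial_of_finrank_pos (R := ℝ) (by lia)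
  let ν : Measure E := Measure.addHaar
  let μ := ν.withDensity fun x ↦ φ ‖x‖
  have hσ0 : ν.toSphere Set.univ ≠ 0 := Measure.measure_univ_ne_zero.2 ν.toSphere_ne_zero
  have hσ : ν.toSphere Set.univ ≠ ⊤ := measure_ne_top _ _
  have hmass : μ Set.univ = (∫⁻ r, φ r ∂radialMeasure n) * ν.toSphere Set.univ := by
    rw [withDensity_apply _ MeasurableSet.univ, setLIntegral_univ, lintegral_comp_norm ν hE hφ]
  have hcost : ∫⁻ x, ‖x‖ₑ ∂μ =
      (∫⁻ r, ENNReal.ofReal r * φ r ∂radialMeasure n) * ν.toSphere Set.univ := by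
    rw [lintegral_withDensity_eq_lintegral_mul _ (by fun_prop) measurable_enorm,
      ← lintegral_comp_norm ν hE (by fun_prop)]
    exact lintegral_congr fun x ↦ by rw [Pi.mul_apply, ofReal_norm, mul_comm]
  have : IsFiniteMeasure μ := ⟨by rw [hmass]; exact ENNReal.mul_lt_top hfin.lt_top hσ.lt_top⟩
  have : NeZero μ :=
    ⟨Measure.measure_univ_ne_zero.1 (by rw [hmass]; exact mul_ne_zero h0 hσ0)⟩
  refine (isDiffPrivate_withDensity ν hdp).optimalCost_le_div.trans_eq ?_
  rw [hcost, hmass, ENNReal.mul_div_mul_right _ _ hσ0 hσ]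

end Radial

section Staircase

/-- The staircase density with step width `D`: it is `1` up to radius `γ` and drops by the factor
`exp (-ε)` at each of the radii `γ, γ + D, γ + 2 * D, …`. -/
def stair (D γ ε r : ℝ) : ℝ≥0∞ :=
  ENNReal.ofReal (exp (-ε)) ^ ⌈(r - γ) / D⌉₊

variable {D γ ε r : ℝ}

@[fun_prop]
lemma measurable_stair : Measurable (stair D γ ε) :=
  measurable_const.pow (Nat.measurable_ceil.comp (by fun_prop))

lemma stair_of_le (hD : 0 ≤ D) (hr : r ≤ γ) : stair D γ ε r = 1 := by
  rw [stair, Nat.ceil_eq_zero.2 (div_nonpos_of_nonpos_of_nonneg (sub_nonpos.2 hr) hD), pow_zero]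

lemma stair_of_mem_Ioc (hD : 0 < D) (hr : r ∈ Set.Ioc γ (γ + D)) :
    stair D γ ε r = ENNReal.ofReal (exp (-ε)) := by
  have hceil : ⌈(r - γ) / D⌉₊ = 1 := by
    rw [Nat.ceil_eq_iff one_ne_zero, lt_div_iff₀ hD, div_le_iff₀ hD]
    constructor <;> norm_num <;> linarith [hr.1, hr.2]
  rw [stair, hceil, pow_one]

lemma stair_le_mul_stair (hD : 0 < D) (hε : 0 ≤ ε) {r' : ℝ} (hr : r' ≤ r + D) :
    stair D γ ε r ≤ ENNReal.ofReal (exp ε) * stair D γ ε r' := by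
  have hstep : ⌈(r' - γ) / D⌉₊ ≤ ⌈(r - γ) / D⌉₊ + 1 := by
    rw [Nat.ceil_le, Nat.cast_add_one, div_le_iff₀ hD]
    linarith [(div_le_iff₀ hD).1 (Nat.le_ceil ((r - γ) / D))]
  have hexp : ENNReal.ofReal (exp ε) * ENNReal.ofReal (exp (-ε)) = 1 := by
    rw [← ENNReal.ofReal_mul (exp_nonneg ε), ← exp_add, add_neg_cancel, exp_zero,
      ENNReal.ofReal_one]
  calc stair D γ ε r
      = ENNReal.ofReal (exp ε) * ENNReal.ofReal (exp (-ε)) ^ (⌈(r - γ) / D⌉₊ + 1) := by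
        rw [pow_succ', ← mul_assoc, hexp, one_mul, stair]
    _ ≤ ENNReal.ofReal (exp ε) * stair D γ ε r' := by
        gcongr
        exact pow_le_pow_right_of_le_one' (by simpa using hε) hstep

-- For `1 ≤ ε` every step drops at least by the factor `e`, so the tail bound can be uniform in `ε`
-- and `γ`.
lemma stair_le_of_lt (hD : 0 < D) (hγ : γ ≤ D) (hε : 1 ≤ ε) (hr : γ + D < r) :
    stair D γ ε r ≤ ENNReal.ofReal (exp (-ε)) ^ 2 * ENNReal.ofReal (exp (3 - r / D)) := by
  obtain ⟨k, hk⟩ : ∃ k, ⌈(r - γ) / D⌉₊ = 2 + k := by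
    refine Nat.exists_eq_add_of_le (Nat.add_one_le_ceil_iff.2 ?_)
    rw [lt_div_iff₀ hD]
    norm_num
    linarith
  have hkr : r / D - 3 ≤ k := by
    have hle := Nat.le_ceil ((r - γ) / D)
    rw [hk, sub_div] at hle
    push_cast at hle
    linarith [(div_le_one hD).2 hγ]
  rw [stair, hk, pow_add, ← ENNReal.ofReal_pow (exp_nonneg _) k, ← exp_nat_mul]
  gcongr
  nlinarith

lemma lintegral_pow_mul_exp_radialMeasure_lt_top (n k : ℕ) (hD : 0 < D) :
    ∫⁻ r, ENNReal.ofReal (r ^ k) * ENNReal.ofReal (exp (3 - r / D)) ∂radialMeasure n < ⊤ := by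
  have hint : IntegrableOn (fun r : ℝ ↦ r ^ ((n + k : ℕ) : ℝ) * exp (-D⁻¹ * r)) (Set.Ioi 0) := by
    have := integrableOn_rpow_mul_exp_neg_mul_rpow (s := (n + k : ℕ)) (p := 1)
      (neg_one_lt_zero.trans_le (Nat.cast_nonneg _)) one_pos (inv_pos.2 hD)
    simpa only [rpow_one] using this
  rw [lintegral_radialMeasure n (by fun_prop)]
  refine lt_of_eq_of_lt (setLIntegral_congr_fun measurableSet_Ioi fun r hr ↦ ?_)
    (hint.const_mul (exp 3)).lintegral_lt_top
  have hr0 : 0 ≤ r := (Set.mem_Ioi.1 hr).le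
  rw [← ENNReal.ofReal_mul (by positivity), ← ENNReal.ofReal_mul (by positivity), rpow_natCast]
  congr 1
  rw [sub_eq_add_neg, exp_add, pow_add, div_eq_inv_mul, neg_mul]
  ring

lemma lintegral_radialMeasure_eq_add (n : ℕ) (hγ : 0 ≤ γ) (hD : 0 ≤ D) (f : ℝ → ℝ≥0∞) :
    ∫⁻ r, f r ∂radialMeasure n = ∫⁻ r in Set.Ioc 0 γ, f r ∂radialMeasure n +
      ∫⁻ r in Set.Ioc γ (γ + D), f r ∂radialMeasure n +
      ∫⁻ r in Set.Ioi (γ + D), f r ∂radialMeasure n := by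
  rw [← lintegral_union measurableSet_Ioc (Set.Ioc_disjoint_Ioc_of_le le_rfl),
    Set.Ioc_union_Ioc_eq_Ioc hγ (by linarith), ← lintegral_union measurableSet_Ioi
      (Set.Ioc_disjoint_Ioi le_rfl), Set.Ioc_union_Ioi_eq_Ioi (by linarith),
    Measure.restrict_eq_self_of_ae_mem (s := Set.Ioi 0) (ae_radialMeasure_pos n)]

lemma lintegral_mul_stair (n : ℕ) (hD : 0 < D) (hγ : 0 ≤ γ) {f : ℝ → ℝ≥0∞} (hf : Measurable f) :
    ∫⁻ r, f r * stair D γ ε r ∂radialMeasure n = ∫⁻ r in Set.Ioc 0 γ, f r ∂radialMeasure n +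
      ENNReal.ofReal (exp (-ε)) * ∫⁻ r in Set.Ioc γ (γ + D), f r ∂radialMeasure n +
      ∫⁻ r in Set.Ioi (γ + D), f r * stair D γ ε r ∂radialMeasure n := by
  rw [lintegral_radialMeasure_eq_add n hγ hD.le, ← lintegral_const_mul _ hf]
  congr 2
  · exact setLIntegral_congr_fun measurableSet_Ioc fun r hr ↦ by
      rw [stair_of_le hD.le hr.2, mul_one]
  · exact setLIntegral_congr_fun measurableSet_Ioc fun r hr ↦ by
      rw [stair_of_mem_Ioc hD hr, mul_comm]

lemma lintegral_Ioi_mul_stair_le (n : ℕ) (hD : 0 < D) (hγ : γ ≤ D) (hε : 1 ≤ ε) {f : ℝ → ℝ≥0∞}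
    (hf : Measurable f) :
    ∫⁻ r in Set.Ioi (γ + D), f r * stair D γ ε r ∂radialMeasure n ≤
      ENNReal.ofReal (exp (-ε)) ^ 2 *
        ∫⁻ r, f r * ENNReal.ofReal (exp (3 - r / D)) ∂radialMeasure n := by
  rw [← lintegral_const_mul _ (by fun_prop)]
  refine (setLIntegral_mono (by fun_prop) fun r hr ↦ ?_).trans (setLIntegral_le_lintegral _ _)
  rw [mul_left_comm]
  gcongr
  exact stair_le_of_lt hD hγ hε hr

/-- The `k`-th moment, with respect to Lebesgue measure, of the first two steps of `stair D γ ε`. -/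
def stairMoment (D γ ε : ℝ) (k : ℕ) : ℝ :=
  (∫ r in 0..γ, r ^ k) + exp (-ε) * ∫ r in γ..γ + D, r ^ k

lemma integral_pow_nonneg {x y : ℝ} (hx : 0 ≤ x) (hxy : x ≤ y) (k : ℕ) :
    0 ≤ ∫ r in x..y, r ^ k :=
  intervalIntegral.integral_nonneg hxy fun _ hr ↦ pow_nonneg (hx.trans hr.1) k

lemma stairMoment_pos (hD : 0 ≤ D) (hγ : 0 < γ) (k : ℕ) : 0 < stairMoment D γ ε k := by
  have hfirst : 0 < ∫ r in 0..γ, r ^ k :=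
    intervalIntegral.intervalIntegral_pos_of_pos_on ((continuous_pow k).intervalIntegrable _ _)
      (fun r hr ↦ pow_pos hr.1 k) hγ
  have hsecond := integral_pow_nonneg hγ.le (le_add_of_nonneg_right hD) k
  exact add_pos_of_pos_of_nonneg hfirst (by positivity)

lemma ofReal_stairMoment (hD : 0 ≤ D) (hγ : 0 ≤ γ) (n k : ℕ) :
    ENNReal.ofReal (stairMoment D γ ε (n + k)) =
      ∫⁻ r in Set.Ioc 0 γ, ENNReal.ofReal (r ^ k) ∂radialMeasure n +
        ENNReal.ofReal (exp (-ε)) *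
          ∫⁻ r in Set.Ioc γ (γ + D), ENNReal.ofReal (r ^ k) ∂radialMeasure n := by
  have hγD : γ ≤ γ + D := le_add_of_nonneg_right hD
  rw [stairMoment, ENNReal.ofReal_add (integral_pow_nonneg le_rfl hγ _)
      (mul_nonneg (exp_nonneg _) (integral_pow_nonneg hγ hγD _)),
    ENNReal.ofReal_mul (exp_nonneg _),
    setLIntegral_Ioc_radialMeasure n (by fun_prop) le_rfl hγ fun r hr ↦ pow_nonneg hr.1.le k,
    setLIntegral_Ioc_radialMeasure n (by fun_prop) hγ hγD
      fun r hr ↦ pow_nonneg (hγ.trans hr.1.le) k]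
  simp only [pow_add]

lemma ofReal_stairMoment_le_lintegral (hD : 0 < D) (hγ : 0 ≤ γ) (n k : ℕ) :
    ENNReal.ofReal (stairMoment D γ ε (n + k)) ≤
      ∫⁻ r, ENNReal.ofReal (r ^ k) * stair D γ ε r ∂radialMeasure n := by
  rw [lintegral_mul_stair n hD hγ (by fun_prop), ofReal_stairMoment hD.le hγ]
  exact le_self_add

lemma lintegral_pow_mul_stair_le (hD : 0 < D) (hγ : 0 ≤ γ) (hγD : γ ≤ D) (hε : 1 ≤ ε) (n k : ℕ) :
    ∫⁻ r, ENNReal.ofReal (r ^ k) * stair D γ ε r ∂radialMeasure n ≤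
      ENNReal.ofReal (stairMoment D γ ε (n + k)) + ENNReal.ofReal (exp (-ε)) ^ 2 *
        ∫⁻ r, ENNReal.ofReal (r ^ k) * ENNReal.ofReal (exp (3 - r / D)) ∂radialMeasure n := by
  rw [lintegral_mul_stair n hD hγ (by fun_prop), ofReal_stairMoment hD.le hγ]
  gcongr
  exact lintegral_Ioi_mul_stair_le n hD hγD hε (by fun_prop)

end Staircase

lemma exists_forall_optimalCost_le {E : Type*} [NormedAddCommGroup E] [NormedSpace ℝ E]
    [FiniteDimensional ℝ E] [MeasurableSpace E] [BorelSpace E] {n : ℕ}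
    (hE : Module.finrank ℝ E = n + 1) {Δ : ℝ} (hΔ : 0 < Δ) :
    ∃ C, ∀ ε γ, 1 ≤ ε → 0 < γ → γ ≤ Δ → optimalCost E Δ ε ≤
      ENNReal.ofReal ((stairMoment Δ γ ε (n + 1) + exp (-ε) ^ 2 * C) / stairMoment Δ γ ε n) := by
  have htail := lintegral_pow_mul_exp_radialMeasure_lt_top n (hD := hΔ)
  refine ⟨(∫⁻ r, ENNReal.ofReal (r ^ 1) * ENNReal.ofReal (exp (3 - r / Δ))
    ∂radialMeasure n).toReal, fun ε γ hε hγ hγΔ ↦ ?_⟩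
  have hmass : ENNReal.ofReal (stairMoment Δ γ ε n) ≤ ∫⁻ r, stair Δ γ ε r ∂radialMeasure n := by
    simpa using ofReal_stairMoment_le_lintegral hΔ hγ.le n 0
  have hpos := stairMoment_pos (ε := ε) hΔ.le hγ n
  have hfin : ∫⁻ r, stair Δ γ ε r ∂radialMeasure n ≠ ⊤ := by
    have hle := lintegral_pow_mul_stair_le hΔ hγ.le hγΔ hε n 0
    simp only [pow_zero, ENNReal.ofReal_one, one_mul] at hle
    refine ne_top_of_le_ne_top (ENNReal.add_ne_top.2 ⟨ENNReal.ofReal_ne_top, ?_⟩) hle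
    exact ENNReal.mul_ne_top (by finiteness) (by simpa using (htail 0).ne)
  refine (optimalCost_le_of_radial hE measurable_stair
    (fun r r' hr ↦ stair_le_mul_stair hΔ (by linarith) hr)
    ((ENNReal.ofReal_pos.2 hpos).trans_le hmass).ne' hfin).trans ?_
  rw [ENNReal.ofReal_div_of_pos hpos, ENNReal.ofReal_add (stairMoment_pos hΔ.le hγ _).le
    (by positivity), ENNReal.ofReal_mul (by positivity), ENNReal.ofReal_pow (exp_nonneg _),
    ENNReal.ofReal_toReal (htail 1).ne]
  gcongr
  simpa only [pow_one] using lintegral_pow_mul_stair_le hΔ hγ.le hγΔ hε n 1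

/-! ### Asymptotics in dimension two -/

section Plane

lemma integral_mul_sub_const (x y v : ℝ) :
    ∫ r in x..y, r ^ 1 * (r - v) = (y ^ 3 - x ^ 3) / 3 - v * (y ^ 2 - x ^ 2) / 2 := by
  simp only [pow_one, mul_sub, ← pow_two]
  rw [intervalIntegral.integral_sub (by simp) (by simp), intervalIntegral.integral_mul_const,
    integral_pow, integral_id]
  push_cast
  ring

lemma setLIntegral_ofReal_const_sub {a v : ℝ} (ha : 0 ≤ a) (hav : a ≤ v) :
    ∫⁻ r in Set.Ioc 0 a, ENNReal.ofReal (v - r) ∂radialMeasure 1 =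
      ENNReal.ofReal (a ^ 2 * (3 * v - 2 * a) / 6) := by
  rw [setLIntegral_Ioc_radialMeasure 1 (by fun_prop) le_rfl ha
    fun r hr ↦ sub_nonneg.2 (hr.2.trans hav)]
  simp only [← neg_sub _ v, mul_neg, intervalIntegral.integral_neg, integral_mul_sub_const]
  congr 1
  ring

lemma setLIntegral_ofReal_sub_const {v w : ℝ} (hv : 0 ≤ v) (hvw : v ≤ w) :
    ∫⁻ r in Set.Ioc v w, ENNReal.ofReal (r - v) ∂radialMeasure 1 =
      ENNReal.ofReal ((w - v) ^ 2 * (2 * w + v) / 6) := by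
  rw [setLIntegral_Ioc_radialMeasure 1 (by fun_prop) hv hvw fun r hr ↦ sub_nonneg.2 hr.1.le,
    integral_mul_sub_const]
  congr 1
  ring

variable {E : Type*} [NormedAddCommGroup E] [NormedSpace ℝ E] [FiniteDimensional ℝ E]
  [MeasurableSpace E] [BorelSpace E]

lemma ofReal_mul_le_optimalCost (hE : Module.finrank ℝ E = 2) {Δ ε η w : ℝ} (hΔ : 0 ≤ Δ)
    (hη0 : 0 ≤ η) (hη1 : η ≤ 1) (hw0 : 0 ≤ w) (hw1 : w ≤ 1)
    (hA : w ^ 3 * (η ^ 2 * (3 - 2 * η)) ≤ exp (-ε) * ((1 - w) ^ 2 * (2 + w)))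
    (hAB : w ^ 3 ≤ exp (-ε) * ((1 + η * w - w) ^ 2 * (2 * (1 + η * w) + w))) :
    ENNReal.ofReal (Δ * w) ≤ optimalCost E Δ ε := by
  have hv : 0 ≤ Δ * w := by positivity
  have ha : 0 ≤ η * (Δ * w) := by positivity
  have hav : η * (Δ * w) ≤ Δ * w := mul_le_of_le_one_left hv hη1
  have hvΔ : Δ * w ≤ Δ := mul_le_of_le_one_right hΔ hw1
  have hscale {p q : ℝ} (hpq : p ≤ exp (-ε) * q) : exp ε * (Δ ^ 3 * p / 6) ≤ Δ ^ 3 * q / 6 := by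
    rw [exp_neg, inv_mul_eq_div, le_div_iff₀' (exp_pos ε)] at hpq
    calc exp ε * (Δ ^ 3 * p / 6) = Δ ^ 3 * (exp ε * p) / 6 := by ring
      _ ≤ Δ ^ 3 * q / 6 := by gcongr
  refine le_iInf₂ fun μ hμ ↦ ?_
  have := hμ.1
  refine hμ.2.ofReal_le_lintegral_enorm (n := 1) hE ha hav ?_ ?_
  · rw [setLIntegral_ofReal_const_sub ha hav, setLIntegral_ofReal_sub_const hv hvΔ,
      ← ENNReal.ofReal_mul (exp_nonneg ε)]
    refine ENNReal.ofReal_le_ofReal ?_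
    convert! hscale hA using 1 <;> ring
  · rw [setLIntegral_ofReal_const_sub hv le_rfl, setLIntegral_ofReal_sub_const hv (by linarith),
      ← ENNReal.ofReal_mul (exp_nonneg ε)]
    refine ENNReal.ofReal_le_ofReal ?_
    convert! hscale hAB using 1 <;> ring

lemma exp_neg_div_three_pow (ε : ℝ) : exp (-ε / 3) ^ 3 = exp (-ε) := by
  rw [← exp_nat_mul]
  congr 1
  push_cast
  ring

lemma tendsto_exp_neg_div_three : Tendsto (fun ε ↦ exp (-ε / 3)) atTop (𝓝[>] 0) := by
  have htop : Tendsto (fun ε : ℝ ↦ ε / 3) atTop atTop := tendsto_id.atTop_div_const (by norm_num)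
  simp only [neg_div]
  exact tendsto_exp_atBot_nhdsGT.comp (tendsto_neg_atBot_iff.2 htop)

lemma eventually_lt_of_continuous {f g : ℝ → ℝ} (hf : Continuous f) (hg : Continuous g)
    (h0 : f 0 < g 0) : ∀ᶠ s in 𝓝[>] 0, f s < g s :=
  nhdsWithin_le_nhds ((hf.tendsto 0).eventually_lt (hg.tendsto 0) h0)

lemma eventually_near_lt {c y η : ℝ} (hc : c ^ 3 = 2) (hη0 : 0 < η) (hη1 : η < 1) :
    ∀ᶠ s in 𝓝[>] 0, (c + s * y) ^ 3 * (η ^ 2 * (3 - 2 * η)) <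
      (1 - s * (c + s * y)) ^ 2 * (2 + s * (c + s * y)) := by
  refine eventually_lt_of_continuous (by fun_prop) (by fun_prop) ?_
  have hgap : 0 < (1 - η) ^ 2 * (1 + 2 * η) := by
    have := sub_pos.2 hη1
    positivity
  simp only [zero_mul, add_zero, sub_zero, hc]
  linarith

-- The two sides agree at `s = 0` because `c ^ 3 = 2`; dividing the difference by `s` leaves
-- `3 * c * (2 * η - 1 - c * y)` there.
lemma eventually_far_lt {c y η : ℝ} (hc0 : 0 < c) (hc : c ^ 3 = 2) (hη : c * y < 2 * η - 1) :
    ∀ᶠ s in 𝓝[>] 0, (c + s * y) ^ 3 <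
      (1 + η * (s * (c + s * y)) - s * (c + s * y)) ^ 2 *
        (2 * (1 + η * (s * (c + s * y))) + s * (c + s * y)) := by
  have hquot : ∀ᶠ s in 𝓝[>] 0, 3 * c ^ 2 * y + 3 * c * s * y ^ 2 + s ^ 2 * y ^ 3 <
      3 * (2 * η - 1) * (c + s * y) + 6 * η * (η - 1) * s * (c + s * y) ^ 2 +
        (η - 1) ^ 2 * (2 * η + 1) * s ^ 2 * (c + s * y) ^ 3 := by
    refine eventually_lt_of_continuous (by fun_prop) (by fun_prop) ?_
    have hgap : 0 < c * (2 * η - 1 - c * y) := mul_pos hc0 (by linarith)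
    simp only [zero_mul, mul_zero, add_zero, ne_eq, OfNat.ofNat_ne_zero, not_false_eq_true,
      zero_pow]
    linarith
  filter_upwards [hquot, self_mem_nhdsWithin] with s hs hs0
  have hscaled := mul_lt_mul_of_pos_left hs (Set.mem_Ioi.1 hs0)
  linear_combination hscaled + hc

-- With `v = Δ * s * (c + s * y)` and `a = η * v`, the first condition of the lower bound has slack
-- of order one, while the second one holds for some `η < 1` exactly when `c * y < 1`.
lemma eventually_le_optimalCost (hE : Module.finrank ℝ E = 2) {Δ c y : ℝ} (hΔ : 0 ≤ Δ)
    (hc0 : 0 < c) (hc : c ^ 3 = 2) (hy : c * y < 1) :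
    ∀ᶠ ε in atTop,
      ENNReal.ofReal (Δ * (exp (-ε / 3) * (c + exp (-ε / 3) * y))) ≤ optimalCost E Δ ε := by
  obtain ⟨η, hη, hη1⟩ : ∃ η, max 0 ((1 + c * y) / 2) < η ∧ η < 1 :=
    exists_between (max_lt one_pos (by linarith))
  obtain ⟨hη0, hηy⟩ := max_lt_iff.1 hη
  have hs := tendsto_exp_neg_div_three
  have hx : ∀ᶠ s in 𝓝[>] 0, 0 < c + s * y :=
    eventually_lt_of_continuous (by fun_prop) (by fun_prop) (by simpa)
  have hw : ∀ᶠ s in 𝓝[>] 0, s * (c + s * y) < 1 :=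
    eventually_lt_of_continuous (by fun_prop) (by fun_prop) (by simp)
  filter_upwards [hs.eventually hx, hs.eventually hw,
    hs.eventually (eventually_near_lt (y := y) hc hη0 hη1),
    hs.eventually (eventually_far_lt (y := y) (η := η) hc0 hc (by linarith))]
    with ε hx hw hnear hfar
  refine ofReal_mul_le_optimalCost hE hΔ hη0.le hη1.le (by positivity) hw.le ?_ ?_ <;>
    rw [← exp_neg_div_three_pow, mul_pow]
  · rw [mul_assoc]
    exact mul_le_mul_of_nonneg_left hnear.le (by positivity)
  · exact mul_le_mul_of_nonneg_left hfar.le (by positivity)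

lemma stairMoment_one {Δ s c ε : ℝ} (hs : exp (-ε) = s ^ 3) :
    stairMoment Δ (Δ * (c * s)) ε 1 = Δ ^ 2 * s ^ 2 / 2 * (c ^ 2 + s + 2 * c * s ^ 2) := by
  rw [stairMoment, integral_pow, integral_pow, hs]
  push_cast
  ring

lemma stairMoment_two {Δ s c ε : ℝ} (hc : c ^ 3 = 2) (hs : exp (-ε) = s ^ 3) :
    stairMoment Δ (Δ * (c * s)) ε 2 = Δ ^ 3 * s ^ 3 * (1 + c * s + c ^ 2 * s ^ 2) := by
  rw [stairMoment, integral_pow, integral_pow, hs]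
  push_cast
  linear_combination Δ ^ 3 * s ^ 3 / 3 * hc

-- `γ = Δ * c * s` balances the moments of the first two steps to leading order.
lemma eventually_optimalCost_le (hE : Module.finrank ℝ E = 2) {Δ c y : ℝ} (hΔ : 0 < Δ)
    (hc0 : 0 < c) (hc : c ^ 3 = 2) (hy : 1 < c * y) :
    ∀ᶠ ε in atTop,
      optimalCost E Δ ε ≤ ENNReal.ofReal (Δ * (exp (-ε / 3) * (c + exp (-ε / 3) * y))) := by
  obtain ⟨C, hC⟩ := exists_forall_optimalCost_le (n := 1) hE hΔ
  have hs := tendsto_exp_neg_div_three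
  have hγ : ∀ᶠ s in 𝓝[>] 0, c * s < 1 :=
    eventually_lt_of_continuous (by fun_prop) (by fun_prop) (by simp)
  have hquot : ∀ᶠ s in 𝓝[>] 0, Δ ^ 3 * c + 2 * s ^ 2 * C <
      Δ ^ 3 * (y * (c ^ 2 + s + 2 * c * s ^ 2)) := by
    refine eventually_lt_of_continuous (by fun_prop) (by fun_prop) ?_
    have hgap : 0 < Δ ^ 3 * (c * (c * y - 1)) := by
      have := sub_pos.2 hy
      positivity
    simp only [mul_zero, zero_mul, add_zero, ne_eq, OfNat.ofNat_ne_zero, not_false_eq_true,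
      zero_pow]
    linarith
  filter_upwards [eventually_ge_atTop 1, hs.eventually hγ, hs.eventually hquot] with ε hε hγ hquot
  have hs0 := exp_pos (-ε / 3)
  have hb := (exp_neg_div_three_pow ε).symm
  set s := exp (-ε / 3)
  refine (hC ε (Δ * (c * s)) hε (by positivity) (mul_le_of_le_one_right hΔ.le hγ.le)).trans
    (ENNReal.ofReal_le_ofReal ?_)
  rw [stairMoment_one hb, stairMoment_two hc hb, hb, div_le_iff₀ (by positivity)]
  have hscaled := mul_le_mul_of_nonneg_left hquot.le (by positivity : 0 ≤ s ^ 4 / 2)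
  linear_combination hscaled - Δ ^ 3 * s ^ 3 / 2 * hc

lemma eventually_optimalCost_ne_top (hE : Module.finrank ℝ E = 2) {Δ : ℝ} (hΔ : 0 < Δ) :
    ∀ᶠ ε in atTop, optimalCost E Δ ε ≠ ⊤ := by
  obtain ⟨C, hC⟩ := exists_forall_optimalCost_le (n := 1) hE hΔ
  filter_upwards [eventually_ge_atTop 1] with ε hε
  exact ((hC ε Δ hε hΔ le_rfl).trans_lt ENNReal.ofReal_lt_top).ne

lemma exp_two_mul_div_three_mul (Δ c y ε : ℝ) :
    exp (2 * ε / 3) *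
      (Δ * (exp (-ε / 3) * (c + exp (-ε / 3) * y)) - c * Δ * exp (-ε / 3)) = Δ * y := by
  have hone : exp (2 * ε / 3) * (exp (-ε / 3) * exp (-ε / 3)) = 1 := by
    rw [← exp_add, ← exp_add, exp_eq_one_iff]
    ring
  linear_combination Δ * y * hone

lemma tendsto_exp_mul_toReal_optimalCost_sub (hE : Module.finrank ℝ E = 2) {Δ c : ℝ}
    (hΔ : 0 < Δ) (hc0 : 0 < c) (hc : c ^ 3 = 2) :
    Tendsto (fun ε ↦ exp (2 * ε / 3) *
      ((optimalCost E Δ ε).toReal - c * Δ * exp (-ε / 3))) atTop (𝓝 (Δ / c)) := by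
  refine tendsto_order.2 ⟨fun b hb ↦ ?_, fun b hb ↦ ?_⟩
  · obtain ⟨y, hby, hyc⟩ : ∃ y, b / Δ < y ∧ y < 1 / c :=
      exists_between (by rwa [div_lt_div_iff₀ hΔ hc0, one_mul, ← lt_div_iff₀ hc0])
    rw [lt_div_iff₀' hc0] at hyc
    filter_upwards [eventually_le_optimalCost hE hΔ.le hc0 hc hyc,
      eventually_optimalCost_ne_top hE hΔ] with ε hle htop
    have hV := (ENNReal.ofReal_le_iff_le_toReal htop).1 hle
    refine ((div_lt_iff₀' hΔ).1 hby).trans_le ?_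
    rw [← exp_two_mul_div_three_mul Δ c y ε]
    gcongr
  · obtain ⟨y, hyc, hby⟩ : ∃ y, 1 / c < y ∧ y < b / Δ :=
      exists_between (by rwa [div_lt_div_iff₀ hc0 hΔ, one_mul, ← div_lt_iff₀ hc0])
    have hy0 : 0 < y := (one_div_pos.2 hc0).trans hyc
    rw [div_lt_iff₀' hc0] at hyc
    filter_upwards [eventually_optimalCost_le hE hΔ hc0 hc hyc] with ε hle
    have hV := ENNReal.toReal_le_of_le_ofReal (by positivity) hle
    refine lt_of_le_of_lt ?_ ((lt_div_iff₀' hΔ).1 hby)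
    rw [← exp_two_mul_div_three_mul Δ c y ε]
    gcongr

lemma tendsto_exp_mul_of_tendsto_exp_mul_sub {V : ℝ → ℝ} {a b : ℝ}
    (hV : Tendsto (fun ε ↦ exp (2 * ε / 3) * (V ε - a * exp (-ε / 3))) atTop (𝓝 b)) :
    Tendsto (fun ε ↦ exp (ε / 3) * V ε) atTop (𝓝 a) := by
  have hdecay : Tendsto (fun ε ↦ exp (-ε / 3)) atTop (𝓝 0) :=
    tendsto_nhds_of_tendsto_nhdsWithin tendsto_exp_neg_div_three
  have hlim := (hdecay.mul hV).const_add a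
  rw [zero_mul, add_zero] at hlim
  refine hlim.congr fun ε ↦ ?_
  have hsplit : exp (-ε / 3) * exp (2 * ε / 3) = exp (ε / 3) := by
    rw [← exp_add]
    ring_nf
  have hone : exp (ε / 3) * exp (-ε / 3) = 1 := by
    rw [← exp_add, exp_eq_one_iff]
    ring
  linear_combination (V ε - a * exp (-ε / 3)) * hsplit - a * hone

theorem Vstar_low_privacy_general (hE : Module.finrank ℝ E = 2) {Δ : ℝ} (hΔ : 0 < Δ) :
    Tendsto (fun ε ↦ exp (ε / 3) * (optimalCost E Δ ε).toReal)
      atTop (𝓝 ((2 : ℝ) ^ ((1 : ℝ) / 3) * Δ)) ∧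
    Tendsto (fun ε ↦ exp (2 * ε / 3) *
        ((optimalCost E Δ ε).toReal - (2 : ℝ) ^ ((1 : ℝ) / 3) * Δ * exp (-ε / 3)))
      atTop (𝓝 (Δ / (2 : ℝ) ^ ((1 : ℝ) / 3))) := by
  have hc : ((2 : ℝ) ^ ((1 : ℝ) / 3)) ^ 3 = 2 := by
    rw [← rpow_mul_natCast zero_le_two]
    norm_num
  have hsecond := tendsto_exp_mul_toReal_optimalCost_sub hE hΔ (by positivity) hc
  exact ⟨tendsto_exp_mul_of_tendsto_exp_mul_sub hsecond, hsecond⟩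

end Plane

/-! ### The `ℓ¹` plane -/

lemma norm_toLp_eq_l1 (x : ℝ × ℝ) : ‖WithLp.toLp 1 x‖ = l1 x :=
  WithLp.prod_norm_eq_of_L1 _

lemma isDiffPrivate_map_toLp_iff {Δ ε : ℝ} {μ : Measure (ℝ × ℝ)} :
    IsDiffPrivate Δ ε (μ.map (MeasurableEquiv.toLp 1 (ℝ × ℝ))) ↔ DPC ε Δ μ := by
  let e := MeasurableEquiv.toLp 1 (ℝ × ℝ)
  have himage (S : Set (WithLp 1 (ℝ × ℝ))) (t : ℝ × ℝ) :
      e ⁻¹' ((· + e t) '' S) = (· + t) '' (e ⁻¹' S) := by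
    ext x
    simp only [Set.image_add_right, Set.mem_preimage]
    rfl
  refine ⟨fun h S hS t ht ↦ ?_, fun h S hS t ht ↦ ?_⟩
  · have hle := h (e '' S) (e.measurableSet_image.2 hS) (e t) ((norm_toLp_eq_l1 t).trans_le ht)
    rwa [e.map_apply, e.map_apply, himage, e.injective.preimage_image] at hle
  · obtain ⟨t, rfl⟩ := e.surjective t
    rw [e.map_apply, e.map_apply, himage]
    exact h _ (e.measurable hS) t ((norm_toLp_eq_l1 t).symm.trans_le ht)

lemma Vstar_eq_optimalCost (Δ ε : ℝ) : Vstar Δ ε = optimalCost (WithLp 1 (ℝ × ℝ)) Δ ε := by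
  let e := MeasurableEquiv.toLp 1 (ℝ × ℝ)
  have hsurj : Function.Surjective (Measure.map e) := fun μ ↦ ⟨μ.map e.symm, e.map_map_symm⟩
  refine hsurj.iInf_congr _ fun μ ↦ iInf_congr_Prop ?_ fun _ ↦ ?_
  · rw [isDiffPrivate_map_toLp_iff, Measure.isProbabilityMeasure_map_iff e.measurable.aemeasurable]
  · rw [lintegral_map_equiv]
    exact lintegral_congr fun x ↦ by rw [← ofReal_norm]; exact congrArg _ (norm_toLp_eq_l1 x)

lemma finrank_l1_plane : Module.finrank ℝ (WithLp 1 (ℝ × ℝ)) = 2 := by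
  rw [(WithLp.linearEquiv 1 ℝ (ℝ × ℝ)).finrank_eq]
  simp

/-- Low privacy regime: V*(ε) = 2^{1/3}·Δ·e^{−ε/3} + (Δ/2^{1/3})·e^{−2ε/3} + o(e^{−2ε/3})
as ε → +∞; precisely, e^{ε/3}·V*(ε) → 2^{1/3}·Δ, and
e^{2ε/3}·(V*(ε) − 2^{1/3}·Δ·e^{−ε/3}) → Δ/2^{1/3}. -/
theorem Vstar_low_privacy (Δ : ℝ) (hΔ : 0 < Δ) :
    Tendsto (fun ε : ℝ => Real.exp (ε / 3) * (Vstar Δ ε).toReal)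
      atTop (nhds ((2 : ℝ) ^ ((1 : ℝ) / 3) * Δ)) ∧
    Tendsto (fun ε : ℝ =>
        Real.exp (2 * ε / 3) *
          ((Vstar Δ ε).toReal - (2 : ℝ) ^ ((1 : ℝ) / 3) * Δ * Real.exp (-ε / 3)))
      atTop (nhds (Δ / (2 : ℝ) ^ ((1 : ℝ) / 3))) := by
  simpa only [Vstar_eq_optimalCost] using
    Vstar_low_privacy_general (E := WithLp 1 (ℝ × ℝ)) finrank_l1_plane hΔ
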